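/- Let G be a finite simple graph and let S be a set of vertices of G such that the subgraph of G induced on S is isomorphic to T₆ (K_{3,3} minus an edge) and at most 3 edges of G have exactly one endpoint in S. Then for every set F of vertices of G disjoint from S that induces an acyclic subgraph of G, there exists a 4-element subset S' of S such that F ∪ S' induces an acyclic subgraph of G. -/

import Mathlib

/-- The graph `T₆`: the complete bipartite graph `K_{3,3}` with parts
`{inl 0, inl 1, inl 2}` and `{inr 0, inr 1, inr 2}`, minus the edge `inl 2 — inr 2`. -/
def T6graph : SimpleGraph (Fin 3 ⊕ Fin 3) where
  Adj x y := (∃ i j, x = Sum.inl i ∧ y = Sum.inr j ∧ ¬(i = 2 ∧ j = 2)) ∨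
             (∃ i j, x = Sum.inr j ∧ y = Sum.inl i ∧ ¬(i = 2 ∧ j = 2))
  symm := by
    constructor
    rintro x y (⟨i, j, h1, h2, h3⟩ | ⟨i, j, h1, h2, h3⟩)
    · exact Or.inr ⟨i, j, h2, h1, h3⟩
    · exact Or.inl ⟨i, j, h2, h1, h3⟩
  loopless := by
    constructor
    rintro x (⟨i, j, h1, h2, -⟩ | ⟨i, j, h1, h2, -⟩) <;> simp_all

/-- The set of edges of `G` with exactly one endpoint in `S`. -/
def edgeCut {V : Type*} (G : SimpleGraph V) (S : Set V) : Set (Sym2 V) :=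
  {e | e ∈ G.edgeSet ∧ ∃ u v, e = s(u, v) ∧ u ∈ S ∧ v ∉ S}

/-!
Split the vertex set of `T₆` into two independent triples `A` and `B`. At most 3 edges join `A ∪ B`
to `F`, so one of the triples, say `A`, sends at most one edge to `F`. If `b ∈ B` has the fewest
neighbours in `F`, then `A ∪ {b}` still sends at most one edge to `F`: a second one would need
either an edge from `A` and one from each vertex of `B`, or two edges from each vertex of `B`. As
`A` is independent, `A ∪ {b}` induces a subgraph of a star, and two induced forests joined by at
most one edge form a forest.
-/

open Finset SimpleGraph

section Cut

variable {V : Type*} {G : SimpleGraph V} {S : Set V} {u v : V}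

lemma mem_iff_mem_of_walk_avoiding_edgeCut (p : G.Walk u v) (hp : ∀ e ∈ p.edges, e ∉ edgeCut G S) :
    u ∈ S ↔ v ∈ S := by
  induction p with
  | nil => rfl
  | @cons u w v huw p ih =>
    simp only [Walk.edges_cons, List.forall_mem_cons] at hp
    have huw_iff : u ∈ S ↔ w ∈ S :=
      ⟨fun hu => by_contra fun hw => hp.1 ⟨huw, u, w, rfl, hu, hw⟩,
        fun hw => by_contra fun hu => hp.1 ⟨huw, w, u, Sym2.eq_swap, hw, hu⟩⟩
    exact huw_iff.trans (ih hp.2)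

lemma isBridge_of_edgeCut_subsingleton (hS : (edgeCut G S).Subsingleton) {e : Sym2 V}
    (he : e ∈ edgeCut G S) : G.IsBridge e := by
  obtain ⟨-, u, v, rfl, hu, hv⟩ := id he
  rw [isBridge_iff]
  rintro ⟨p⟩
  refine hv ((mem_iff_mem_of_walk_avoiding_edgeCut p fun e' _ he' => ?_).1 hu)
  obtain ⟨he'_mem, hcross⟩ := he'
  rw [edgeSet_deleteEdges] at he'_mem
  exact he'_mem.2 (hS ⟨he'_mem.1, hcross⟩ he)

lemma mem_iff_mem_of_mem_support_of_isCycle (hS : (edgeCut G S).Subsingleton) {c : G.Walk u u}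
    (hc : c.IsCycle) (hv : v ∈ c.support) : u ∈ S ↔ v ∈ S := by
  classical
  refine mem_iff_mem_of_walk_avoiding_edgeCut (c.takeUntil v hv) fun e he heS => ?_
  exact (isBridge_of_edgeCut_subsingleton hS heS).notMem_edges_of_isCycle hc
    (c.edges_takeUntil_subset_edges hv he)

end Cut

section EdgesBetween

variable {V : Type*} {G : SimpleGraph V}

/-- The set `E(X, Y)` of edges of `G` with one endpoint in `X` and the other in `Y`, which need not
be disjoint. Edges are unordered, so an edge inside `X ∩ Y` counts once. -/
def edgesBetween (G : SimpleGraph V) (X Y : Set V) : Set (Sym2 V) :=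
  {e | e ∈ G.edgeSet ∧ ∃ x ∈ X, ∃ y ∈ Y, e = s(x, y)}

lemma edgesBetween_subset_edgeCut {S Y : Set V} (hdisj : Disjoint S Y) :
    edgesBetween G S Y ⊆ edgeCut G S := by
  rintro e ⟨he, x, hx, y, hy, rfl⟩
  exact ⟨he, x, y, rfl, hx, hdisj.notMem_of_mem_right hy⟩

lemma edgesBetween_eq_biUnion (X Y : Set V) :
    edgesBetween G X Y = ⋃ x ∈ X, (fun y => s(x, y)) '' (G.neighborSet x ∩ Y) := by
  ext e
  simp only [edgesBetween, Set.mem_ofPred_eq, Set.mem_iUnion, Set.mem_image, Set.mem_inter_iff,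
    mem_neighborSet, exists_prop]
  constructor
  · rintro ⟨he, x, hx, y, hy, rfl⟩
    exact ⟨x, hx, y, ⟨he, hy⟩, rfl⟩
  · rintro ⟨x, hx, y, ⟨he, hy⟩, rfl⟩
    exact ⟨he, x, hx, y, hy, rfl⟩

lemma encard_edgesBetween {X : Finset V} {Y : Set V} (hXY : Disjoint (X : Set V) Y) :
    (edgesBetween G X Y).encard = ∑ x ∈ X, (G.neighborSet x ∩ Y).encard := by
  have hdisj : (X : Set V).PairwiseDisjoint
      fun x => (fun y => s(x, y)) '' (G.neighborSet x ∩ Y) := by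
    intro x hx x' _ hne
    refine Set.disjoint_left.2 ?_
    rintro _ ⟨y, -, rfl⟩ ⟨y', ⟨-, hy'⟩, heq⟩
    rcases Sym2.eq_iff.1 heq with ⟨rfl, -⟩ | ⟨-, rfl⟩
    · exact hne rfl
    · exact Set.disjoint_left.1 hXY hx hy'
  rw [edgesBetween_eq_biUnion, X.finite_toSet.encard_biUnion hdisj, finsum_mem_coe_finset]
  refine sum_congr rfl fun x _ => Function.Injective.encard_image ?_ _
  exact fun _ _ => Sym2.congr_right.1

lemma edgeCut_induce_union_subsingleton {X Y : Set V} (hXY : (edgesBetween G X Y).Subsingleton) :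
    (edgeCut (G.induce (X ∪ Y)) (Subtype.val ⁻¹' X)).Subsingleton := by
  have hmap {e} (he : e ∈ edgeCut (G.induce (X ∪ Y)) (Subtype.val ⁻¹' X)) :
      e.map Subtype.val ∈ edgesBetween G X Y := by
    obtain ⟨hadj, u, v, rfl, hu, hv⟩ := he
    exact ⟨hadj, u, hu, v, v.2.resolve_left hv, rfl⟩
  exact fun e he e' he' => Sym2.map.injective Subtype.val_injective (hXY (hmap he) (hmap he'))

end EdgesBetween

section InducedForest

variable {V : Type*} {G : SimpleGraph V}

lemma not_isCycle_of_isAcyclic_induce {X : Set V} (hX : (G.induce X).IsAcyclic) {v : V}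
    (c : G.Walk v v) (hc : ∀ x ∈ c.support, x ∈ X) : ¬ c.IsCycle := by
  intro hcycle
  rw [← c.map_induce hc] at hcycle
  exact hX _ hcycle.of_map

theorem isAcyclic_induce_union {X Y : Set V} (hX : (G.induce X).IsAcyclic)
    (hY : (G.induce Y).IsAcyclic) (hXY : (edgesBetween G X Y).Subsingleton) :
    (G.induce (X ∪ Y)).IsAcyclic := by
  intro u c hc
  have hside (v) (hv : v ∈ c.support) : u.1 ∈ X ↔ v.1 ∈ X :=
    mem_iff_mem_of_mem_support_of_isCycle (S := Subtype.val ⁻¹' X)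
      (edgeCut_induce_union_subsingleton hXY) hc hv
  have hc' : (c.map (Embedding.induce (G := G) (X ∪ Y)).toHom).IsCycle :=
    hc.map Subtype.val_injective
  by_cases hu : u.1 ∈ X
  · refine not_isCycle_of_isAcyclic_induce hX _ ?_ hc'
    simp only [Walk.support_map, List.forall_mem_map]
    exact fun v hv => (hside v hv).1 hu
  · refine not_isCycle_of_isAcyclic_induce hY _ ?_ hc'
    simp only [Walk.support_map, List.forall_mem_map]
    exact fun v hv => v.2.resolve_left fun hvX => hu ((hside v hv).2 hvX)

lemma isAcyclic_induce_insert_of_isIndepSet {A : Set V} (hA : G.IsIndepSet A) (b : V) :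
    (G.induce (insert b A)).IsAcyclic := by
  refine (isAcyclic_starGraph ⟨b, Set.mem_insert b A⟩).anti fun x y hxy => ?_
  rw [starGraph_adj]
  refine ⟨hxy.ne, ?_⟩
  by_contra! hne
  have mem_A {z : ↥(insert b A)} (hz : z ≠ ⟨b, Set.mem_insert b A⟩) : z.1 ∈ A :=
    z.2.resolve_left fun h => hz (Subtype.ext h)
  exact hA (mem_A hne.1) (mem_A hne.2) (Subtype.coe_ne_coe.2 hxy.ne) hxy

lemma isAcyclic_induce_union_insert [DecidableEq V] {F : Set V} {A : Finset V} {b : V}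
    (hF : (G.induce F).IsAcyclic) (hA : G.IsIndepSet A) (hdisj : Disjoint ↑(insert b A) F)
    (hsum : ∑ x ∈ insert b A, (G.neighborSet x ∩ F).encard ≤ 1) :
    (G.induce (F ∪ ↑(insert b A))).IsAcyclic := by
  rw [← encard_edgesBetween hdisj] at hsum
  rw [Set.union_comm]
  refine isAcyclic_induce_union ?_ hF (Set.encard_le_one_iff_subsingleton.1 hsum)
  rw [coe_insert]
  exact isAcyclic_induce_insert_of_isIndepSet hA b

end InducedForest

section Averaging

variable {α : Type*} {w : α → ℕ∞} {A B : Finset α}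

lemma exists_add_sum_le_one (hB : 3 ≤ #B) (hw : ∑ x ∈ A, w x + ∑ x ∈ B, w x ≤ 3)
    (hA : ∑ x ∈ A, w x ≤ 1) : ∃ b ∈ B, w b + ∑ x ∈ A, w x ≤ 1 := by
  obtain ⟨b, hb, hmin⟩ := B.exists_min_image w (card_pos.1 (by lia))
  refine ⟨b, hb, ?_⟩
  have havg : ∑ x ∈ A, w x + 3 * w b ≤ 3 := calc
    ∑ x ∈ A, w x + 3 * w b ≤ ∑ x ∈ A, w x + #B * w b := by gcongr; exact_mod_cast hB
    _ ≤ ∑ x ∈ A, w x + ∑ x ∈ B, w x := by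
      gcongr
      simpa only [nsmul_eq_mul] using B.card_nsmul_le_sum w (w b) hmin
    _ ≤ 3 := hw
  have hA_ne_top : ∑ x ∈ A, w x ≠ ⊤ := ne_top_of_le_ne_top (by simp) hA
  have hb_ne_top : w b ≠ ⊤ := by
    intro h
    simp [h] at havg
  lift ∑ x ∈ A, w x to ℕ using hA_ne_top with m
  lift w b to ℕ using hb_ne_top with n
  norm_cast at havg hA ⊢
  lia

lemma exists_sum_insert_le_one [DecidableEq α] (hAB : Disjoint A B) (hA : 3 ≤ #A)
    (hB : 3 ≤ #B) (hw : ∑ x ∈ A ∪ B, w x ≤ 3) :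
    (∃ b ∈ B, ∑ x ∈ insert b A, w x ≤ 1) ∨ ∃ a ∈ A, ∑ x ∈ insert a B, w x ≤ 1 := by
  rw [sum_union hAB] at hw
  by_cases hA_le : ∑ x ∈ A, w x ≤ 1
  · obtain ⟨b, hb, hbA⟩ := exists_add_sum_le_one hB hw hA_le
    exact .inl ⟨b, hb, (sum_insert (disjoint_right.1 hAB hb)).trans_le hbA⟩
  have hB_le : ∑ x ∈ B, w x ≤ 1 := by
    by_contra hB_le
    have hfour : (1 + 1 + (1 + 1) : ℕ∞) ≤ 3 :=
      (add_le_add (Order.add_one_le_of_lt (not_le.1 hA_le))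
        (Order.add_one_le_of_lt (not_le.1 hB_le))).trans hw
    norm_num at hfour
  obtain ⟨a, ha, haB⟩ := exists_add_sum_le_one hA ((add_comm _ _).trans_le hw) hB_le
  exact .inr ⟨a, ha, (sum_insert (disjoint_left.1 hAB ha)).trans_le haB⟩

end Averaging

lemma exists_isIndepSet_partition_of_iso_T6graph {V : Type*} [DecidableEq V] {G : SimpleGraph V}
    {S : Finset V} (φ : G.induce (S : Set V) ≃g T6graph) :
    ∃ A B : Finset V, S = A ∪ B ∧ Disjoint A B ∧ G.IsIndepSet A ∧ G.IsIndepSet B ∧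
      #A = 3 ∧ #B = 3 := by
  let e : Fin 3 ⊕ Fin 3 ↪ V := φ.symm.toEquiv.toEmbedding.trans (Function.Embedding.subtype _)
  have he_adj {i j} (h : G.Adj (e i) (e j)) : T6graph.Adj i j := φ.symm.map_adj_iff.1 h
  have hS (v : V) : v ∈ S ↔ ∃ i, e i = v := by
    refine ⟨fun hv => ?_, ?_⟩
    · obtain ⟨i, hi⟩ := φ.symm.surjective ⟨v, hv⟩
      exact ⟨i, congrArg Subtype.val hi⟩
    · rintro ⟨i, rfl⟩
      exact (φ.symm i).2
  have hindep (f : Fin 3 ↪ Fin 3 ⊕ Fin 3) (hf : ∀ i j, ¬ T6graph.Adj (f i) (f j)) :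
      G.IsIndepSet (univ.map (f.trans e) : Finset V) := by
    intro x hx y hy _ hxy
    obtain ⟨i, -, rfl⟩ := mem_map.1 hx
    obtain ⟨j, -, rfl⟩ := mem_map.1 hy
    exact hf i j (he_adj hxy)
  refine ⟨univ.map (.trans .inl e), univ.map (.trans .inr e), ?_, ?_,
    hindep _ (by simp [T6graph]), hindep _ (by simp [T6graph]), by simp, by simp⟩
  · ext v
    simp [hS]
  · simp [Finset.disjoint_left]

theorem extend_forest_of_T6_subgraph_general {V : Type*} [DecidableEq V] (G : SimpleGraph V)
    {A B : Finset V} (hAB : Disjoint A B) (hA : G.IsIndepSet A) (hB : G.IsIndepSet B)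
    (hcard : #A = #B) (hthree : 3 ≤ #A)
    (hcut : (edgeCut G ((A ∪ B : Finset V) : Set V)).encard ≤ 3)
    (F : Set V) (hdisj : Disjoint F ((A ∪ B : Finset V) : Set V)) (hF : (G.induce F).IsAcyclic) :
    ∃ S' : Finset V, S' ⊆ A ∪ B ∧ #S' = #A + 1 ∧ (G.induce (F ∪ (S' : Set V))).IsAcyclic := by
  have hsum : ∑ x ∈ A ∪ B, (G.neighborSet x ∩ F).encard ≤ 3 := by
    rw [← encard_edgesBetween hdisj.symm]
    exact (Set.encard_le_encard (edgesBetween_subset_edgeCut hdisj.symm)).trans hcut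
  have hdisj' {T : Finset V} (hT : T ⊆ A ∪ B) : Disjoint (T : Set V) F :=
    hdisj.symm.mono_left (coe_subset.2 hT)
  rcases exists_sum_insert_le_one hAB hthree (hcard ▸ hthree) hsum with
    ⟨b, hb, hbA⟩ | ⟨a, ha, haB⟩
  · have hsub : insert b A ⊆ A ∪ B := insert_subset (mem_union_right A hb) subset_union_left
    exact ⟨insert b A, hsub, card_insert_of_notMem (disjoint_right.1 hAB hb),
      isAcyclic_induce_union_insert hF hA (hdisj' hsub) hbA⟩
  · have hsub : insert a B ⊆ A ∪ B := insert_subset (mem_union_left B ha) subset_union_right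
    exact ⟨insert a B, hsub, by rw [card_insert_of_notMem (disjoint_left.1 hAB ha), hcard],
      isAcyclic_induce_union_insert hF hB (hdisj' hsub) haB⟩

/-- If `S` induces a copy of `T₆` in `G` with at most 3 edges of `G` leaving `S`, then
any induced forest `F` of `G` disjoint from `S` can be extended by 4 vertices of `S`. -/
theorem extend_forest_of_T6_subgraph {V : Type*} [Fintype V] (G : SimpleGraph V)
    (S : Finset V)
    (hiso : Nonempty ((G.induce (S : Set V)) ≃g T6graph))
    (hcut : (edgeCut G (S : Set V)).ncard ≤ 3)
    (F : Set V) (hdisj : Disjoint F (S : Set V)) (hF : (G.induce F).IsAcyclic) :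
    ∃ S' : Finset V, S' ⊆ S ∧ S'.card = 4 ∧
      (G.induce (F ∪ (S' : Set V))).IsAcyclic := by
  classical
  obtain ⟨A, B, rfl, hAB, hA, hB, hA3, hB3⟩ := exists_isIndepSet_partition_of_iso_T6graph hiso.some
  rw [← Nat.cast_le (α := ℕ∞), (Set.toFinite _).cast_ncard_eq] at hcut
  simpa only [hA3] using extend_forest_of_T6_subgraph_general G hAB hA hB (hA3.trans hB3.symm)
    hA3.ge hcut F hdisj hF
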